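/- There exists c₀ ∈ (0, c_crit) such that for every c with c₀ < c < c_crit, there is no twice-differentiable function f : ℝ → ℝ satisfying Jang's equation on L_c at every u ∈ ℝ. (Equivalently: on the Cauchy slices L_c sufficiently close to the Schwarzschild singularity, every radial solution of Jang's equation blows up.) -/

import Mathlib

/-- The function `φ(r) = e^{r/(2m)-1}(r - 2m)` defining the Kruskal radius implicitly. -/
noncomputable def phi (m r : ℝ) : ℝ := Real.exp (r / (2*m) - 1) * (r - 2*m)

/-- The derivative `φ_r(r) = (r/(2m)) e^{r/(2m)-1}`. -/
noncomputable def phiR (m r : ℝ) : ℝ := (r / (2*m)) * Real.exp (r / (2*m) - 1)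

/-- The critical parameter `c_crit = √(8m/e)`. -/
noncomputable def cCrit (m : ℝ) : ℝ := Real.sqrt (8*m / Real.exp 1)

/-- The right-hand side of Jang's equation on the slice `L_c`:
`f''(u) = jangRHS m c u r (f'(u))` where `r = r(u)` solves `φ(r) = u(u+c)`. -/
noncomputable def jangRHS (m c u r p : ℝ) : ℝ :=
  c * Real.sqrt (2*m / phiR m r + p^2/4) *
      ((1 / phiR m r) * (1/(2*m) - 3/r) - p^2/(2*m*r))
    - ((2*u + c)/(4*m*r)) * p^3
    - ((2*u + c)/(2 * phiR m r)) * (1/(2*m) + 5/r) * p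

/-- The right-hand side `F_c(s,h)` of the transformed Jang equation,
with `r = r_c(s)` solving `φ(r) = (c²/4)(s²-1)`. -/
noncomputable def Fc (m c s r h : ℝ) : ℝ :=
  (c^2/2) * Real.sqrt (2*m*(1 - h^2) / phiR m r + h^2/4) *
      (((1 - h^2) / phiR m r) * (1/(2*m) - 3/r) - h^2/(2*m*r))
    - (c^2*s/(8*m*r)) * h^3
    - (c^2*s/(4 * phiR m r)) * (1/(2*m) + 5/r) * (h*(1 - h^2))

/-!
Jang's equation for radial functions is first order in the slope `p = f'`. Centre the slice at
`v = u + c / 2`, so that `φ(r) = v² - c² / 4`, while `φ(0) = -c_crit² / 4`. Since `φ` has a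
nondegenerate minimum at `r = 0`, on a window `|v| ≤ η` with `c_crit² - c² ≤ 4η²` the radius is
at most a multiple `ρ` of `η`. There, with `P = 2m / φ_r ≥ 4m² / ρ`, the terms of the equation
that are even in `p` dominate the odd ones, which carry a factor `v`, and the slope obeys a
Riccati inequality `p' ≤ -L (q² + p²)` with `q² = 4m² / ρ` and `L q = c m / ρ²`. Hence
`arctan (p / q)` falls at a rate of order `η⁻²` on a window of width `2η`, by more than `π` in
total once `η` is small, which is impossible.
-/

theorem mul_lt_pi_of_deriv_le_neg_mul_sq_add_sq {p p' : ℝ → ℝ} {a b L q : ℝ} (hab : a < b)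
    (hq : 0 < q) (hcont : ContinuousOn p (Set.Icc a b))
    (hderiv : ∀ u ∈ Set.Ioo a b, HasDerivAt p (p' u) u)
    (hbound : ∀ u ∈ Set.Ioo a b, p' u ≤ -L * (q ^ 2 + p u ^ 2)) :
    L * q * (b - a) < Real.pi := by
  obtain ⟨ξ, hξ, hslope⟩ := exists_hasDerivAt_eq_slope (fun u ↦ Real.arctan (p u / q)) _ hab
    (Real.continuous_arctan.comp_continuousOn (hcont.div_const q))
    (fun u hu ↦ ((hderiv u hu).div_const q).arctan)
  have hrate : 1 / (1 + (p ξ / q) ^ 2) * (p' ξ / q) ≤ -(L * q) := by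
    have : 1 / (1 + (p ξ / q) ^ 2) * (p' ξ / q) = p' ξ * q / (q ^ 2 + p ξ ^ 2) := by field_simp
    rw [this, div_le_iff₀ (by positivity)]
    linarith [mul_le_mul_of_nonneg_right (hbound ξ hξ) hq.le]
  rw [hslope, div_le_iff₀ (sub_pos.2 hab)] at hrate
  linarith [Real.neg_pi_div_two_lt_arctan (p b / q), Real.arctan_lt_pi_div_two (p a / q)]

section Radius

theorem sq_div_four_le_one_add_exp_mul_sub_one {x : ℝ} (hx : 0 ≤ x) :
    x ^ 2 / 4 ≤ 1 + Real.exp x * (x - 1) := by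
  rcases le_total x 1 with hx1 | hx1
  · have hhalf : (1 - x / 2) ^ 2 ≤ Real.exp (-x) := by
      calc (1 - x / 2) ^ 2 ≤ Real.exp (-(x / 2)) ^ 2 :=
            pow_le_pow_left₀ (by linarith) (Real.one_sub_le_exp_neg _) 2
        _ = Real.exp (-x) := by rw [← Real.exp_nat_mul]; ring_nf
    have hmul : Real.exp x * (1 - x / 2) ^ 2 ≤ 1 := by
      calc Real.exp x * (1 - x / 2) ^ 2 ≤ Real.exp x * Real.exp (-x) := by gcongr
        _ = 1 := by rw [← Real.exp_add, add_neg_cancel, Real.exp_zero]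
    have : x ^ 2 ≤ Real.exp x * x ^ 2 := le_mul_of_one_le_left (sq_nonneg x) (Real.one_le_exp hx)
    linarith
  · have : (x + 1) * (x - 1) ≤ Real.exp x * (x - 1) :=
      mul_le_mul_of_nonneg_right (Real.add_one_le_exp x) (sub_nonneg.2 hx1)
    linarith [sq_nonneg x]

variable {m : ℝ}

theorem cCrit_sq (hm : 0 ≤ m) : cCrit m ^ 2 = 8 * m / Real.exp 1 :=
  Real.sq_sqrt (by positivity)

theorem cCrit_pos (hm : 0 < m) : 0 < cCrit m :=
  Real.sqrt_pos.2 (by positivity)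

theorem sq_le_phi_add {r : ℝ} (hm : 0 < m) (hr : 0 ≤ r) :
    r ^ 2 ≤ 8 * m * Real.exp 1 * phi m r + 16 * m ^ 2 := by
  have hx := sq_div_four_le_one_add_exp_mul_sub_one (x := r / (2 * m)) (by positivity)
  calc r ^ 2 = 16 * m ^ 2 * ((r / (2 * m)) ^ 2 / 4) := by field_simp; ring
    _ ≤ 16 * m ^ 2 * (1 + Real.exp (r / (2 * m)) * (r / (2 * m) - 1)) := by gcongr
    _ = 8 * m * Real.exp 1 * phi m r + 16 * m ^ 2 := by
      rw [phi, Real.exp_sub]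
      field_simp
      ring

theorem radius_sq_le {c u r : ℝ} (hm : 0 < m) (hr : 0 ≤ r) (h : phi m r = u * (u + c)) :
    r ^ 2 ≤ 2 * m * Real.exp 1 * (4 * (u + c / 2) ^ 2 + (cCrit m ^ 2 - c ^ 2)) := by
  calc r ^ 2 ≤ 8 * m * Real.exp 1 * phi m r + 16 * m ^ 2 := sq_le_phi_add hm hr
    _ = 2 * m * Real.exp 1 * (4 * (u + c / 2) ^ 2 + (cCrit m ^ 2 - c ^ 2)) := by
      rw [h, cCrit_sq hm.le]
      field_simp
      ring

end Radius

section SlopeBound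

variable {m c u r p : ℝ}

theorem phiR_pos (hm : 0 < m) (hr : 0 < r) : 0 < phiR m r := by
  unfold phiR
  positivity

theorem phiR_le (hm : 0 < m) (hr : 0 ≤ r) (hrm : r ≤ 2 * m) : phiR m r ≤ r / (2 * m) :=
  mul_le_of_le_one_right (by positivity) <|
    Real.exp_le_one_iff.2 <| sub_nonpos.2 <| div_le_one_of_le₀ hrm (by positivity)

theorem jangRHS_eq_even_add_odd (hm : m ≠ 0) (hr : r ≠ 0) :
    jangRHS m c u r p = 1 / (2 * m * r) *
      (c * Real.sqrt (2 * m / phiR m r + p ^ 2 / 4) *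
          (2 * m / phiR m r * (r / (2 * m) - 3) - p ^ 2)
        + -((u + c / 2) * p) * (p ^ 2 + 2 * m / phiR m r * (r / (2 * m) + 5))) := by
  have hφ : phiR m r ≠ 0 := by
    simp [phiR, hm, hr]
  rw [jangRHS]
  generalize Real.sqrt _ = S
  field_simp
  ring

theorem jangRHS_le_neg_mul_add_sq (hm : 0 < m) (hr : 0 < r) (hrm : r ≤ m)
    (hu : |u + c / 2| ≤ c / 10) :
    jangRHS m c u r p ≤ -(c * Real.sqrt (2 * m / phiR m r + p ^ 2 / 4) / (4 * m * r)) *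
      (2 * m / phiR m r + p ^ 2) := by
  rw [jangRHS_eq_even_add_odd hm.ne' hr.ne']
  have hP : 0 < 2 * m / phiR m r := div_pos (by positivity) (phiR_pos hm hr)
  set P := 2 * m / phiR m r
  set S := Real.sqrt (P + p ^ 2 / 4)
  have hc : 0 ≤ c := by linarith [abs_nonneg (u + c / 2)]
  have hx : r / (2 * m) ≤ 1 / 2 := by
    rw [div_le_iff₀ (by positivity)]
    linarith
  have hpS : |p| ≤ 2 * S := by
    have : |p| / 2 ≤ S := Real.le_sqrt_of_sq_le (by rw [div_pow, sq_abs]; linarith)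
    linarith
  have hodd : -((u + c / 2) * p) ≤ c * S / 5 := by
    calc -((u + c / 2) * p) ≤ |u + c / 2| * |p| := by rw [← abs_mul]; exact neg_le_abs _
      _ ≤ c / 10 * (2 * S) := by gcongr
      _ = c * S / 5 := by ring
  have hcoeff : P * (6 / 5 * (r / (2 * m)) - 2) - 4 / 5 * p ^ 2 ≤ -(1 / 2) * (P + p ^ 2) := by
    linarith [mul_le_mul_of_nonneg_left hx hP.le, sq_nonneg p]
  calc 1 / (2 * m * r) * (c * S * (P * (r / (2 * m) - 3) - p ^ 2)
          + -((u + c / 2) * p) * (p ^ 2 + P * (r / (2 * m) + 5)))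
      ≤ 1 / (2 * m * r) * (c * S * (P * (r / (2 * m) - 3) - p ^ 2)
          + c * S / 5 * (p ^ 2 + P * (r / (2 * m) + 5))) := by gcongr
    _ = 1 / (2 * m * r) * (c * S * (P * (6 / 5 * (r / (2 * m)) - 2) - 4 / 5 * p ^ 2)) := by ring
    _ ≤ 1 / (2 * m * r) * (c * S * (-(1 / 2) * (P + p ^ 2))) := by gcongr
    _ = -(c * S / (4 * m * r)) * (P + p ^ 2) := by field_simp; ring

theorem jangRHS_le_of_radius_le {ρ : ℝ} (hr : 0 < r) (hrρ : r ≤ ρ) (hρm : ρ ≤ m)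
    (hu : |u + c / 2| ≤ c / 10) :
    jangRHS m c u r p ≤
      -(c * (2 * m / Real.sqrt ρ) / (4 * m * ρ)) * ((2 * m / Real.sqrt ρ) ^ 2 + p ^ 2) := by
  have hρ : 0 < ρ := hr.trans_le hrρ
  have hm : 0 < m := hρ.trans_le hρm
  have hc : 0 ≤ c := by linarith [abs_nonneg (u + c / 2)]
  have hq : (2 * m / Real.sqrt ρ) ^ 2 ≤ 2 * m / phiR m r := by
    have hφ : phiR m r ≤ ρ / (2 * m) := (phiR_le hm hr.le (by linarith)).trans (by gcongr)
    calc (2 * m / Real.sqrt ρ) ^ 2 = 2 * m / (ρ / (2 * m)) := by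
          rw [div_pow, Real.sq_sqrt hρ.le]; field_simp
      _ ≤ 2 * m / phiR m r := div_le_div_of_nonneg_left (by positivity) (phiR_pos hm hr) hφ
  have hS : 2 * m / Real.sqrt ρ ≤ Real.sqrt (2 * m / phiR m r + p ^ 2 / 4) :=
    Real.le_sqrt_of_sq_le (by linarith [sq_nonneg p])
  refine (jangRHS_le_neg_mul_add_sq hm hr (hrρ.trans hρm) hu).trans ?_
  rw [neg_mul, neg_mul, neg_le_neg_iff]
  gcongr

end SlopeBound

section BlowUp

variable {m c η : ℝ}

theorem radius_le_of_abs_add_half_le {u r : ℝ} (hm : 0 < m) (hr : 0 ≤ r) (hη : 0 ≤ η)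
    (h : phi m r = u * (u + c)) (hc : cCrit m ^ 2 - 4 * η ^ 2 ≤ c ^ 2) (hu : |u + c / 2| ≤ η) :
    r ≤ 4 * Real.sqrt (m * Real.exp 1) * η := by
  refine le_of_sq_le_sq ?_ (by positivity)
  have hu2 : (u + c / 2) ^ 2 ≤ η ^ 2 := sq_le_sq' (abs_le.1 hu).1 (abs_le.1 hu).2
  calc r ^ 2 ≤ 2 * m * Real.exp 1 * (4 * (u + c / 2) ^ 2 + (cCrit m ^ 2 - c ^ 2)) :=
        radius_sq_le hm hr h
    _ ≤ 2 * m * Real.exp 1 * (8 * η ^ 2) := by gcongr; linarith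
    _ = (4 * Real.sqrt (m * Real.exp 1) * η) ^ 2 := by
      rw [mul_pow, mul_pow, Real.sq_sqrt (by positivity)]; ring

theorem not_forall_hasDerivAt_jangRHS {p R : ℝ → ℝ} (hm : 0 < m) (hc0 : 0 < c) (hη : 0 < η)
    (hηc : 200 * η ≤ cCrit m) (hc : cCrit m ^ 2 - 4 * η ^ 2 ≤ c ^ 2)
    (hR : ∀ u, |u + c / 2| ≤ η → 0 < R u ∧ phi m (R u) = u * (u + c)) :
    ¬ ∀ u, |u + c / 2| ≤ η → HasDerivAt p (jangRHS m c u (R u) (p u)) u := by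
  intro hp
  have hcrit : (200 * η) ^ 2 ≤ cCrit m ^ 2 := by gcongr
  have hcη : 100 * η ≤ c := le_of_sq_le_sq (by linarith [sq_nonneg η]) hc0.le
  set ρ := 4 * Real.sqrt (m * Real.exp 1) * η
  have hρ : 0 < ρ := by positivity
  have hρsq : ρ ^ 2 = 16 * (m * Real.exp 1) * η ^ 2 := by
    rw [mul_pow, mul_pow, Real.sq_sqrt (by positivity)]; norm_num
  have hρm : ρ ≤ m := by
    refine le_of_sq_le_sq ?_ hm.le
    rw [cCrit_sq hm.le, le_div_iff₀ (Real.exp_pos 1)] at hcrit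
    nlinarith [mul_le_mul_of_nonneg_left hcrit hm.le]
  have hmem : ∀ u, u ∈ Set.Icc (-c / 2 - η) (-c / 2 + η) → |u + c / 2| ≤ η :=
    fun u hu ↦ abs_le.2 ⟨by linarith [hu.1], by linarith [hu.2]⟩
  have hlt := mul_lt_pi_of_deriv_le_neg_mul_sq_add_sq (q := 2 * m / Real.sqrt ρ)
    (by linarith : -c / 2 - η < -c / 2 + η) (by positivity)
    (fun u hu ↦ (hp u (hmem u hu)).continuousAt.continuousWithinAt)
    (fun u hu ↦ hp u (hmem u (Set.Ioo_subset_Icc_self hu)))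
    fun u hu ↦ by
      have hu := hmem u (Set.Ioo_subset_Icc_self hu)
      obtain ⟨hr, hφ⟩ := hR u hu
      exact jangRHS_le_of_radius_le hr
        (radius_le_of_abs_add_half_le hm hr.le hη.le hφ hc hu) hρm (hu.trans (by linarith))
  have hdrop : c * (2 * m / Real.sqrt ρ) / (4 * m * ρ) * (2 * m / Real.sqrt ρ) *
      (-c / 2 + η - (-c / 2 - η)) = c / (8 * Real.exp 1 * η) := by
    calc _ = 2 * c * m * η / (ρ * Real.sqrt ρ ^ 2) := by field_simp; ring
      _ = 2 * c * m * η / ρ ^ 2 := by rw [Real.sq_sqrt hρ.le, sq]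
      _ = c / (8 * Real.exp 1 * η) := by rw [hρsq]; field_simp; norm_num
  rw [hdrop, div_lt_iff₀ (by positivity)] at hlt
  have hconst : Real.pi * (8 * Real.exp 1) ≤ 100 := by
    nlinarith [Real.pi_lt_d2, Real.exp_one_lt_d9, Real.pi_pos, Real.exp_pos 1]
  linarith [mul_le_mul_of_nonneg_right hconst hη.le]

end BlowUp

theorem no_global_radial_solution_general (m : ℝ) (hm : 0 < m) (δ : ℝ) (hδ : 0 < δ) :
    ∃ c₀ ∈ Set.Ioo 0 (cCrit m), ∀ c, c₀ < c →
      ¬ ∃ (f f' R : ℝ → ℝ),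
          (∀ u, |u + c / 2| ≤ δ → 0 < R u ∧ phi m (R u) = u * (u + c)) ∧
          (∀ u, |u + c / 2| ≤ δ → HasDerivAt f (f' u) u) ∧
          (∀ u, |u + c / 2| ≤ δ → HasDerivAt f' (jangRHS m c u (R u) (f' u)) u) := by
  have hcrit : 0 < cCrit m := cCrit_pos hm
  obtain ⟨η, hη, hηδ, hηc⟩ : ∃ η, 0 < η ∧ η ≤ δ ∧ η ≤ cCrit m / 200 :=
    ⟨min δ (cCrit m / 200), by positivity, min_le_left _ _, min_le_right _ _⟩
  refine ⟨Real.sqrt (cCrit m ^ 2 - 4 * η ^ 2), ⟨Real.sqrt_pos.2 ?_, ?_⟩, ?_⟩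
  · nlinarith
  · exact (Real.sqrt_lt' hcrit).2 (by linarith [sq_pos_of_pos hη])
  · rintro c hc ⟨f, p, R, hR, -, hp⟩
    have hc0 : 0 < c := (Real.sqrt_nonneg _).trans_lt hc
    exact not_forall_hasDerivAt_jangRHS hm hc0 hη (by linarith) ((Real.sqrt_lt' hc0).1 hc).le
      (fun u hu ↦ hR u (hu.trans hηδ)) (fun u hu ↦ hp u (hu.trans hηδ))

/-- There exists `c₀ ∈ (0, c_crit)` such that for every `c` with
`c₀ < c < c_crit`, there is no twice-differentiable function `f : ℝ → ℝ` satisfying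
Jang's equation on `L_c` at every `u ∈ ℝ`. -/
theorem no_global_radial_solution (m : ℝ) (hm : 0 < m) :
    ∃ c₀ ∈ Set.Ioo 0 (cCrit m), ∀ c, c₀ < c → c < cCrit m →
      ¬ ∃ (f f' R : ℝ → ℝ),
          (∀ u, 0 < R u ∧ phi m (R u) = u * (u + c)) ∧
          (∀ u, HasDerivAt f (f' u) u) ∧
          (∀ u, HasDerivAt f' (jangRHS m c u (R u) (f' u)) u) := by
  obtain ⟨c₀, hc₀, h⟩ := no_global_radial_solution_general m hm 1 one_pos
  exact ⟨c₀, hc₀, fun c hc _ ⟨f, f', R, hR, hf, hf'⟩ ↦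
    h c hc ⟨f, f', R, fun u _ ↦ hR u, fun u _ ↦ hf u, fun u _ ↦ hf' u⟩⟩
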